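/- arXiv:2510.26454 — 3 statements merged into one kernel-verified Lean document; each statement's English description precedes it below -/
import Mathlib

section
/- Let U ⊆ ℝⁿ be an open set such that the tube Ω := { z ∈ ℂⁿ : (Re z₁, …, Re zₙ) ∈ U } is a nonempty connected open subset of ℂⁿ, and let Δ ⊆ ℂ be an open disc. Let Conv(Ω) denote the convex hull of Ω in ℂⁿ (identified with ℝ^{2n}). Let F : Conv(Ω) × Δ → ℂ be a locally bounded function such that: (i) F is holomorphic (jointly complex differentiable) on the open set Ω × Δ ⊆ ℂ^{n+1}; and (ii) for every fixed t₀ ∈ Δ, the function z ↦ F(z, t₀) is holomorphic on Conv(Ω). Then F is holomorphic on Conv(Ω) × Δ. -/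
open Metric Set Filter Topology in
lemma tube_cauchy {E : Type*} [NormedAddCommGroup E] [NormedSpace ℂ E] {g : E → ℂ} {x : E}
    {r M : ℝ} (hr : 0 < r) (hd : DifferentiableOn ℂ g (ball x r))
    (hM : ∀ y ∈ ball x r, ‖g y‖ ≤ M) : ‖fderiv ℂ g x‖ ≤ 2 * M / r := by
  refine Complex.norm_fderiv_le_div_of_mapsTo_ball hd ?_ hr
  intro y hy
  rw [mem_closedBall, dist_eq_norm]
  have h1 := hM y hy
  have h2 := hM x (mem_ball_self hr)
  have h3 := norm_sub_le (g y) (g x)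
  linarith

open Metric Set Filter Topology in
lemma tube_integral_diff (n : ℕ) (F : (Fin n → ℂ) × ℂ → ℂ) (c w : ℝ → ℂ)
    (hc : Continuous c) (hw : Continuous w) (K M : ℝ) (hK : ∀ θ, ‖c θ‖ ≤ K)
    (z₁ : Fin n → ℂ) (V : Set ((Fin n → ℂ) × ℂ)) (hV : IsOpen V)
    (hd : ∀ θ, ∀ x ∈ V, DifferentiableAt ℂ F (z₁ + w θ • (x.1 - z₁), x.2))
    (hM : ∀ θ, ∀ x ∈ V, ‖F (z₁ + w θ • (x.1 - z₁), x.2)‖ ≤ M)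
    (a b : ℝ) (x₀ : (Fin n → ℂ) × ℂ) (hx₀ : x₀ ∈ V) :
    DifferentiableAt ℂ (fun x : (Fin n → ℂ) × ℂ =>
      ∫ θ in a..b, c θ • F (z₁ + w θ • (x.1 - z₁), x.2)) x₀ := by
  obtain ⟨η, hη, hball⟩ := Metric.isOpen_iff.1 hV x₀ hx₀
  let B : ℝ → ((Fin n → ℂ) × ℂ →L[ℂ] (Fin n → ℂ) × ℂ) := fun θ =>
    (w θ • ContinuousLinearMap.fst ℂ (Fin n → ℂ) ℂ).prod (ContinuousLinearMap.snd ℂ (Fin n → ℂ) ℂ)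
  have hL : ∀ θ x, HasFDerivAt (fun x : (Fin n → ℂ) × ℂ => (z₁ + w θ • (x.1 - z₁), x.2))
      (B θ) x := by
    intro θ x
    refine HasFDerivAt.prodMk ?_ hasFDerivAt_snd
    exact ((hasFDerivAt_fst.sub_const z₁).const_smul (w θ)).const_add z₁
  have hD : ∀ θ, ∀ x ∈ V, HasFDerivAt (fun x : (Fin n → ℂ) × ℂ =>
      F (z₁ + w θ • (x.1 - z₁), x.2))
      ((fderiv ℂ F (z₁ + w θ • (x.1 - z₁), x.2)).comp (B θ)) x := by
    intro θ x hx
    exact (hd θ x hx).hasFDerivAt.comp x (hL θ x)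
  have hcont : ∀ x ∈ V, Continuous fun θ => c θ • F (z₁ + w θ • (x.1 - z₁), x.2) := by
    intro x hx
    refine hc.smul ?_
    rw [continuous_iff_continuousAt]
    intro θ
    have h1 : ContinuousAt F (z₁ + w θ • (x.1 - z₁), x.2) := (hd θ x hx).continuousAt
    exact ContinuousAt.comp (f := fun θ => (z₁ + w θ • (x.1 - z₁), x.2)) h1
      (by fun_prop)
  have hK0 : 0 ≤ K := (norm_nonneg _).trans (hK 0)
  refine (intervalIntegral.hasFDerivAt_integral_of_dominated_of_fderiv_le
    (𝕜 := ℂ) (s := ball x₀ (η/2))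
    (F' := fun x θ => c θ • ((fderiv ℂ F (z₁ + w θ • (x.1 - z₁), x.2)).comp (B θ)))
    (bound := fun _ => K * (2 * M / (η/2))) (ball_mem_nhds _ (by positivity)) ?_ ?_ ?_ ?_ ?_ ?_).differentiableAt
  · filter_upwards [hV.mem_nhds hx₀] with x hx
    exact (hcont x hx).aestronglyMeasurable
  · exact (hcont x₀ hx₀).intervalIntegrable _ _
  · refine MeasureTheory.StronglyMeasurable.aestronglyMeasurable ?_
    refine hc.stronglyMeasurable.smul ?_
    have h1 : MeasureTheory.StronglyMeasurable fun θ =>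
        fderiv ℂ F (z₁ + w θ • (x₀.1 - z₁), x₀.2) := by
      have : Measurable fun θ => fderiv ℂ F (z₁ + w θ • (x₀.1 - z₁), x₀.2) :=
        (measurable_fderiv ℂ F).comp (Continuous.measurable (by fun_prop))
      exact this.stronglyMeasurable
    have h2 : Continuous B := by
      have : Continuous fun θ => w θ • ContinuousLinearMap.fst ℂ (Fin n → ℂ) ℂ := by fun_prop
      exact ((ContinuousLinearMap.prodₗᵢ ℂ (𝕜 := ℂ) (E := (Fin n → ℂ) × ℂ) (F := Fin n → ℂ) (G := ℂ)).continuous).comp (this.prodMk continuous_const)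
    exact (isBoundedBilinearMap_comp (𝕜 := ℂ)).continuous.comp_stronglyMeasurable
      (h1.prodMk h2.stronglyMeasurable)
  · refine Eventually.of_forall fun θ _ x hx => ?_
    have hsub : ball x (η/2) ⊆ V := fun y hy => hball (by
      rw [mem_ball] at *
      linarith [dist_triangle y x x₀])
    have hxV : x ∈ V := hsub (mem_ball_self (by positivity))
    have := tube_cauchy (g := fun x : (Fin n → ℂ) × ℂ =>
      F (z₁ + w θ • (x.1 - z₁), x.2)) (x := x) (r := η/2) (M := M) (by positivity)
      (fun y hy => (hD θ y (hsub hy)).differentiableAt.differentiableWithinAt)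
      (fun y hy => hM θ y (hsub hy))
    rw [(hD θ x hxV).fderiv] at this
    rw [norm_smul]
    exact mul_le_mul (hK θ) this (norm_nonneg _) hK0
  · exact intervalIntegrable_const
  · refine Eventually.of_forall fun θ _ x hx => ?_
    exact (hD θ x (hball (ball_subset_ball (by linarith) hx))).const_smul (c θ)

open Metric Set Filter Topology in
/-- Local extension step. -/
lemma tube_step (n : ℕ) (F : (Fin n → ℂ) × ℂ → ℂ) (zs z₁ : Fin n → ℂ) (t₀ : ℂ) (ρ δ M : ℝ)
    (hδ : 0 < δ) (hδρ : δ ≤ ρ) (hM : ∀ x ∈ ball z₁ (3*ρ) ×ˢ ball t₀ δ, ‖F x‖ ≤ M)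
    (hz : zs ∈ ball z₁ ρ)
    (hd : ∀ x ∈ ball z₁ δ ×ˢ ball t₀ δ, DifferentiableAt ℂ F x)
    (hs : ∀ t ∈ ball t₀ δ, ∀ z ∈ ball z₁ (3*ρ), DifferentiableAt ℂ (fun z => F (z, t)) z) :
    ∀ᶠ p in 𝓝 (zs, t₀), DifferentiableAt ℂ F p := by
  have hρ : 0 < ρ := hδ.trans_le hδρ
  set V : Set ((Fin n → ℂ) × ℂ) := ball z₁ ρ ×ˢ ball t₀ δ with hVdef
  have hV : IsOpen V := isOpen_ball.prod isOpen_ball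
  have hmem : ∀ x ∈ V, ∀ R > 0, ∀ l : ℂ, ‖l‖ ≤ R → z₁ + l • (x.1 - z₁) ∈ ball z₁ (R * ρ) := by
    intro x hx R hR l hl
    have h1 : ‖x.1 - z₁‖ < ρ := by simpa [dist_eq_norm] using hx.1
    rw [mem_ball, dist_eq_norm, add_sub_cancel_left, norm_smul]
    calc ‖l‖ * ‖x.1 - z₁‖ ≤ R * ‖x.1 - z₁‖ := by gcongr
      _ < R * ρ := by gcongr
  let φ : (Fin n → ℂ) × ℂ → ℂ → ℂ := fun x l => F (z₁ + l • (x.1 - z₁), x.2)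
  have hφd : ∀ x ∈ V, DifferentiableOn ℂ (φ x) (ball 0 3) := by
    intro x hx l hl
    have h1 := hs x.2 hx.2 _ (hmem x hx 3 (by norm_num) l (by simpa using (mem_ball_zero_iff.1 hl).le))
    have h2 : DifferentiableAt ℂ (fun l : ℂ => z₁ + l • (x.1 - z₁)) l := by fun_prop
    exact (DifferentiableAt.comp (f := fun l : ℂ => z₁ + l • (x.1 - z₁)) l h1 h2).differentiableWithinAt
  have hφM : ∀ x ∈ V, ∀ l : ℂ, ‖l‖ ≤ 3 → ‖φ x l‖ ≤ M := fun x hx l hl =>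
    hM _ ⟨hmem x hx 3 (by norm_num) l hl, hx.2⟩
  let a : ℕ → (Fin n → ℂ) × ℂ → ℂ := fun k x => (k.factorial : ℂ)⁻¹ * iteratedDeriv k (φ x) 0
  have hsum : ∀ x ∈ V, HasSum (fun k => a k x) (F x) := by
    intro x hx
    have := Complex.hasSum_taylorSeries_on_ball (hφd x hx) (z := 1) (by simp)
    simpa [a, φ] using this
  have hbd : ∀ k, ∀ x ∈ V, ‖a k x‖ ≤ M * (1/2) ^ k := by
    intro k x hx
    have h1 := Complex.norm_iteratedDeriv_le_of_forall_mem_sphere_norm_le (c := 0) (R := 2) (C := M)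
      (f := φ x) k (by norm_num)
      (((hφd x hx).mono (closedBall_subset_ball (by norm_num))).diffContOnCl_ball subset_rfl)
      (fun l hl => hφM x hx l (by rw [mem_sphere_zero_iff_norm.1 hl]; norm_num))
    have hk : (0:ℝ) < k.factorial := by positivity
    simp only [a, norm_mul, norm_inv, Complex.norm_natCast]
    rw [inv_mul_le_iff₀ hk]
    refine h1.trans_eq ?_
    rw [one_div, inv_pow]; ring
  set ε : ℝ := δ / (2 * ρ) with hε
  have hε0 : 0 < ε := by positivity
  have hερ : ε * ρ < δ := by
    rw [hε]; field_simp; linarith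
  have hε3 : ε < 3 := by
    rw [hε, div_lt_iff₀ (by positivity)]; linarith
  have hdiff : ∀ k, ∀ x ∈ V, DifferentiableAt ℂ (a k) x := by
    intro k x hx
    have key := tube_integral_diff n F
      (fun θ => deriv (circleMap 0 ε) θ * (1 / (circleMap 0 ε θ) ^ (k+1))) (circleMap 0 ε)
      (by
        have h1 : ∀ θ, circleMap 0 ε θ ≠ 0 := fun θ => circleMap_ne_center hε0.ne'
        simp only [deriv_circleMap]
        have h2 := continuous_circleMap 0 ε
        refine (h2.mul continuous_const).mul (continuous_const.div (h2.pow _) ?_)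
        intro θ; exact pow_ne_zero _ (h1 θ))
      (continuous_circleMap 0 ε) (ε * (1 / ε ^ (k+1))) M
      (by intro θ; simp [deriv_circleMap, abs_of_pos hε0]) z₁ V hV
      (by
        intro θ y hy
        refine hd _ ⟨ball_subset_ball hερ.le (hmem y hy ε hε0 _ (by simp [abs_of_pos hε0])), hy.2⟩)
      (by
        intro θ y hy
        exact hφM y hy _ (by simp [abs_of_pos hε0]; exact hε3.le))
      0 (2 * Real.pi) x hx
    have h2 := key.const_mul (2 * Real.pi * Complex.I)⁻¹
    refine h2.congr_of_eventuallyEq ?_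
    filter_upwards [hV.mem_nhds hx] with y hy
    have hdy : DifferentiableOn ℂ (φ y) (closedBall 0 ε) :=
      (hφd y hy).mono (closedBall_subset_ball hε3)
    have h3 := Complex.circleIntegral_one_div_sub_center_pow_smul_of_differentiable_on_off_countable
      (f := φ y) (c := 0) hε0 k (countable_empty) hdy.continuousOn
      (fun z hz => (hφd y hy).differentiableAt
        (isOpen_ball.mem_nhds (ball_subset_ball hε3.le hz.1)))
    simp only [circleIntegral, sub_zero, smul_eq_mul] at h3
    simp only [smul_eq_mul, mul_assoc] at h3 ⊢
    simp only [φ] at h3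
    rw [h3]
    simp only [a]
    have : (k.factorial : ℂ) ≠ 0 := by exact_mod_cast k.factorial_ne_zero
    have hpi := Complex.two_pi_I_ne_zero
    field_simp
    rfl
  have hp : ((zs, t₀) : (Fin n → ℂ) × ℂ) ∈ V := ⟨hz, mem_ball_self hδ⟩
  obtain ⟨η, hη, hball⟩ := Metric.isOpen_iff.1 hV _ hp
  have hsub2 : ∀ x ∈ ball ((zs, t₀) : (Fin n → ℂ) × ℂ) (η/2), ball x (η/2) ⊆ V := by
    intro x hx y hy
    apply hball
    rw [mem_ball] at *
    linarith [dist_triangle y x (zs, t₀)]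
  have hη2 : 0 < η/2 := by positivity
  filter_upwards [ball_mem_nhds _ hη2] with x hx
  have hmain := hasFDerivAt_tsum_of_isPreconnected (𝕜 := ℂ) (f := a) (f' := fun k x => fderiv ℂ (a k) x)
    (u := fun k => 2 * (M * (1/2)^k) / (η/2)) (s := ball ((zs, t₀) : (Fin n → ℂ) × ℂ) (η/2))
    (x₀ := (zs, t₀)) (x := x)
    (((summable_geometric_two.mul_left M).mul_left 2).div_const _) isOpen_ball
    (convex_ball _ _).isPreconnected
    (fun k y hy => (hdiff k y (hsub2 y hy (mem_ball_self hη2))).hasFDerivAt)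
    (fun k y hy => tube_cauchy hη2
      (fun w hw => (hdiff k w (hsub2 y hy hw)).differentiableWithinAt)
      (fun w hw => hbd k w (hsub2 y hy hw)))
    (mem_ball_self hη2) (hsum _ hp).summable hx
  refine hmain.differentiableAt.congr_of_eventuallyEq ?_
  filter_upwards [isOpen_ball.mem_nhds hx] with y hy
  exact (hsum y (hsub2 y hy (mem_ball_self hη2))).tsum_eq.symm

open Metric Set Filter Topology in

/-- Hartogs-type lemma for tubes (Lemma `separate_analy`):
Let `Ω` be the tube over an open set `U ⊆ ℝⁿ`, assumed nonempty and connected, and let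
`Δ = ball c r` be an open disc in `ℂ`.  If `F` is locally bounded on `Conv(Ω) × Δ`,
holomorphic on `Ω × Δ`, and holomorphic in the first variable on `Conv(Ω)` for every fixed
`t₀ ∈ Δ`, then `F` is holomorphic on `Conv(Ω) × Δ`. -/
theorem hartogs_tube (n : ℕ) (U : Set (Fin n → ℝ)) (hU : IsOpen U)
    (Ω : Set (Fin n → ℂ)) (hΩ : Ω = {z : Fin n → ℂ | (fun i => (z i).re) ∈ U})
    (hΩconn : IsConnected Ω)
    (c : ℂ) (r : ℝ) (hr : 0 < r)
    (F : (Fin n → ℂ) × ℂ → ℂ)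
    (hlb : ∀ x ∈ (convexHull ℝ Ω) ×ˢ Metric.ball c r,
      ∃ t ∈ nhds x, ∃ C : ℝ, ∀ y ∈ t ∩ ((convexHull ℝ Ω) ×ˢ Metric.ball c r), ‖F y‖ ≤ C)
    (hF1 : DifferentiableOn ℂ F (Ω ×ˢ Metric.ball c r))
    (hF2 : ∀ t₀ ∈ Metric.ball c r,
      DifferentiableOn ℂ (fun z => F (z, t₀)) (convexHull ℝ Ω)) :
    DifferentiableOn ℂ F ((convexHull ℝ Ω) ×ˢ Metric.ball c r) := by
  set D := convexHull ℝ Ω with hD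
  have hΩo : IsOpen Ω := by
    rw [hΩ]
    exact hU.preimage (by fun_prop)
  have hDo : IsOpen D := hΩo.convexHull
  have hDc : Convex ℝ D := convex_convexHull ℝ Ω
  have hΩD : Ω ⊆ D := subset_convexHull ℝ Ω
  rintro ⟨z, t₀⟩ ⟨hzD, ht₀⟩
  suffices h : D ⊆ {z | ∀ᶠ p in 𝓝 (z, t₀), DifferentiableAt ℂ F p} from
    (h hzD).self_of_nhds.differentiableWithinAt
  refine hDc.isPreconnected.subset_of_closure_inter_subset ?_ ?_ ?_
  · rw [isOpen_iff_mem_nhds]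
    intro y hy
    have h1 : ∀ᶠ p in 𝓝 (y, t₀), ∀ᶠ q in 𝓝 p, DifferentiableAt ℂ F q :=
      eventually_eventually_nhds.2 hy
    have h2 : Tendsto (fun y : Fin n → ℂ => (y, t₀)) (𝓝 y) (𝓝 (y, t₀)) :=
      Continuous.tendsto (by fun_prop) y
    exact h2.eventually h1
  · obtain ⟨z₀, hz₀⟩ := hΩconn.nonempty
    refine ⟨z₀, hΩD hz₀, ?_⟩
    have ho : IsOpen (Ω ×ˢ ball c r) := hΩo.prod isOpen_ball
    filter_upwards [ho.mem_nhds (show (z₀, t₀) ∈ Ω ×ˢ ball c r from ⟨hz₀, ht₀⟩)] with p hp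
    exact (hF1 p hp).differentiableAt (ho.mem_nhds hp)
  · rintro zs ⟨hcl, hzs⟩
    obtain ⟨T, hT, M, hM⟩ := hlb (zs, t₀) ⟨hzs, ht₀⟩
    have ho : IsOpen (D ×ˢ ball c r) := hDo.prod isOpen_ball
    have hN := inter_mem hT (ho.mem_nhds (show (zs, t₀) ∈ D ×ˢ ball c r from ⟨hzs, ht₀⟩))
    obtain ⟨R, hR, hball⟩ := Metric.mem_nhds_iff.1 hN
    obtain ⟨z₁, hz₁, hdist⟩ := Metric.mem_closure_iff.1 hcl (R/4) (by positivity)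
    obtain ⟨d, hd, hdb⟩ := Metric.mem_nhds_iff.1 hz₁
    have hsub : ∀ z ∈ ball z₁ (3 * (R/4)), ∀ t ∈ ball t₀ (min d (R/4)),
        (z, t) ∈ T ∩ D ×ˢ ball c r := by
      intro z hz t ht
      apply hball
      rw [mem_ball, Prod.dist_eq, max_lt_iff]
      rw [mem_ball] at hz ht
      rw [dist_comm] at hdist
      exact ⟨by linarith [dist_triangle z z₁ zs], by
        have := lt_of_lt_of_le ht (min_le_right _ _)
        simp only
        linarith⟩
    refine tube_step n F zs z₁ t₀ (R/4) (min d (R/4)) M (by positivity) (min_le_right _ _)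
      ?_ hdist ?_ ?_
    · rintro ⟨z, t⟩ ⟨h1, h2⟩
      exact hM _ (hsub z h1 t h2)
    · rintro ⟨z, t⟩ ⟨h1, h2⟩
      refine hdb ?_
      rw [mem_ball, Prod.dist_eq, max_lt_iff]
      exact ⟨lt_of_lt_of_le h1 (min_le_left _ _), lt_of_lt_of_le h2 (min_le_left _ _)⟩
    · intro t ht z hz
      have := (hsub z hz t ht).2
      exact (hF2 t this.2).differentiableAt (hDo.mem_nhds this.1)
end

section
/- Let U ⊆ ℝⁿ be a nonempty open set. For a set A ⊆ ℝⁿ write T(A) := { z ∈ ℂⁿ : (Re z₁, …, Re zₙ) ∈ A } for the tube over A. Let F be holomorphic on T(conv(U)), where conv(U) is the convex hull of U in ℝⁿ, and assume F is bounded on T(conv(U)). Then sup_{z ∈ T(conv U)} |F(z)| = sup_{z ∈ T(U)} |F(z)|. -/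
/-- The tube over a set `A ⊆ ℝⁿ`: all `z ∈ ℂⁿ` with `Re z ∈ A`. -/
def tube {n : ℕ} (A : Set (Fin n → ℝ)) : Set (Fin n → ℂ) :=
  {z : Fin n → ℂ | (fun i => (z i).re) ∈ A}

/-- Sup-norm equality for tubes over convex hulls (from the proof of Lemma `convh`):
if `F` is holomorphic and bounded on the tube over `conv(U)`, then its sup over the tube
over `conv(U)` equals its sup over the tube over `U`. -/
theorem sup_tube_convexHull (n : ℕ) (U : Set (Fin n → ℝ)) (hUne : U.Nonempty)
    (hUo : IsOpen U) (F : (Fin n → ℂ) → ℂ)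
    (hF : DifferentiableOn ℂ F (tube (convexHull ℝ U)))
    (hb : ∃ C : ℝ, ∀ z ∈ tube (convexHull ℝ U), ‖F z‖ ≤ C) :
    sSup ((fun z => ‖F z‖) '' tube (convexHull ℝ U)) =
      sSup ((fun z => ‖F z‖) '' tube U) := by
  obtain ⟨C, hC⟩ := hb
  have hbd : BddAbove ((fun z => ‖F z‖) '' tube (convexHull ℝ U)) := by
    refine ⟨C, ?_⟩
    rintro _ ⟨z, hz, rfl⟩
    exact hC z hz
  have hsub : tube U ⊆ tube (convexHull ℝ U) := fun z hz => subset_convexHull ℝ U hz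
  have hne : (tube U).Nonempty := by
    obtain ⟨x, hx⟩ := hUne
    exact ⟨fun i => (x i : ℂ), by simpa [tube] using hx⟩
  have hbdU := hbd.mono (Set.image_mono hsub)
  set M := sSup ((fun z => ‖F z‖) '' tube U) with hM
  apply le_antisymm
  · apply csSup_le ((hne.mono hsub).image _)
    rintro _ ⟨z, hz, rfl⟩
    have key : convexHull ℝ U ⊆ {x | x ∈ convexHull ℝ U ∧
        ∀ w : Fin n → ℂ, (fun i => (w i).re) = x → ‖F w‖ ≤ M} := by
      apply convexHull_min
      · intro x hx
        refine ⟨subset_convexHull ℝ U hx, fun w hw => ?_⟩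
        exact le_csSup hbdU ⟨w, by simpa [tube, hw] using hx, rfl⟩
      · rintro x ⟨hx, hxM⟩ y ⟨hy, hyM⟩ a b ha hb' hab
        refine ⟨convex_convexHull ℝ U hx hy ha hb' hab, fun z hz => ?_⟩
        let g : ℂ → (Fin n → ℂ) := fun w i => z i + (w - b) * ((y i - x i : ℝ) : ℂ)
        have hgre : ∀ w : ℂ, (fun i => (g w i).re) = (1 - w.re) • x + w.re • y := by
          intro w
          funext i
          have h := congrFun hz i
          have ha' : a = 1 - b := by linarith
          simp [ha'] at h
          simp [g, -Complex.ofReal_sub, Complex.mul_re, h]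
          ring
        have hgd : Differentiable ℂ g := by
          rw [differentiable_pi]
          intro i
          fun_prop
        have hmap : Set.MapsTo g (Complex.HadamardThreeLines.verticalClosedStrip 0 1)
            (tube (convexHull ℝ U)) := by
          intro w hw
          have hw' : 0 ≤ w.re ∧ w.re ≤ 1 := hw
          change (fun i => (g w i).re) ∈ convexHull ℝ U
          rw [hgre]
          exact convex_convexHull ℝ U hx hy (by linarith) hw'.1 (by ring)
        have hd : DifferentiableOn ℂ (F ∘ g)
            (Complex.HadamardThreeLines.verticalClosedStrip 0 1) :=
          hF.comp hgd.differentiableOn hmap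
        have hcl : closure (Complex.HadamardThreeLines.verticalStrip 0 1) ⊆
            Complex.HadamardThreeLines.verticalClosedStrip 0 1 :=
          closure_minimal (Set.preimage_mono Set.Ioo_subset_Icc_self)
            (isClosed_Icc.preimage Complex.continuous_re)
        have h3 := Complex.HadamardThreeLines.norm_le_interp_of_mem_verticalClosedStrip₀₁'
          (F ∘ g) (z := (b : ℂ)) (a := M) (b := M)
          (by simp only [Complex.HadamardThreeLines.verticalClosedStrip, Set.mem_preimage,
                Complex.ofReal_re]
              exact ⟨hb', by linarith⟩)
          (hd.mono hcl).diffContOnCl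
          ⟨C, by
            rintro _ ⟨w, hw, rfl⟩
            exact hC _ (hmap hw)⟩
          (by
            intro w hw
            have hw' : w.re = 0 := hw
            exact hxM _ (by rw [hgre, hw']; simp))
          (by
            intro w hw
            have hw' : w.re = 1 := hw
            exact hyM _ (by rw [hgre, hw']; simp))
        have hM0 : 0 ≤ M := by
          obtain ⟨v, hv⟩ := hne
          exact (norm_nonneg _).trans (le_csSup hbdU ⟨v, hv, rfl⟩)
        have hgb : g b = z := by funext i; simp [g]
        rw [Function.comp, hgb] at h3
        rw [Complex.ofReal_re, ← Real.rpow_add_of_nonneg hM0 (by linarith) hb'] at h3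
        simpa using h3
    exact (key hz).2 z rfl
  · exact csSup_le_csSup hbd (hne.image _) (Set.image_mono hsub)
end

section
/- Let U ⊆ ℂⁿ be a nonempty bounded open set and let Γ ⊆ closure(U) be a closed set with the norming (Shilov) property: for every function g : ℂⁿ → ℂ that is continuous on closure(U) and holomorphic on U, one has sup_{z ∈ closure(U)} |g(z)| = sup_{z ∈ Γ} |g(z)|. Let V be an open neighborhood of closure(U) and let g_{ij} : V → ℂ (1 ≤ i, j ≤ n) be holomorphic functions such that the matrix (g_{ij}(z)) is invertible for every z ∈ Γ. Then there exists a constant C > 0 such that for every open set W with closure(U) ⊆ W ⊆ V and every holomorphic function f : W → ℂ, one has Σ_{i=1}^n sup_{z ∈ U} |∂f/∂z_i(z)| ≤ C · Σ_{j=1}^n sup_{z ∈ U} | Σ_{i=1}^n g_{ji}(z) ∂f/∂z_i(z) |. -/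
open Metric Set Filter Topology

lemma shilov_fderiv_bound {n : ℕ} {f : (Fin n → ℂ) → ℂ} {x : Fin n → ℂ} {R M : ℝ} (hR : 0 < R)
    (hd : ∀ y ∈ closedBall x R, DifferentiableAt ℂ f y)
    (hM : ∀ y ∈ closedBall x R, ‖f y‖ ≤ M) : ‖fderiv ℂ f x‖ ≤ M / R := by
  have hM0 : 0 ≤ M := (norm_nonneg _).trans (hM x (mem_closedBall_self hR.le))
  refine ContinuousLinearMap.opNorm_le_bound _ (by positivity) fun w => ?_
  rcases eq_or_ne w 0 with rfl | hw
  · simp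
  have hw' : 0 < ‖w‖ := norm_pos_iff.2 hw
  have hmem : ∀ t ∈ closedBall (0:ℂ) (R / ‖w‖), x + t • w ∈ closedBall x R := by
    intro t ht
    rw [mem_closedBall_zero_iff, le_div_iff₀ hw'] at ht
    simpa [mem_closedBall, dist_eq_norm, norm_smul] using ht
  have hder : ∀ t ∈ closedBall (0:ℂ) (R / ‖w‖),
      HasDerivAt (fun t : ℂ => f (x + t • w)) (fderiv ℂ f (x + t • w) w) t := by
    intro t ht
    have h1 : HasDerivAt (fun t : ℂ => x + t • w) w t := by
      simpa using ((hasDerivAt_id t).smul_const w).const_add x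
    exact (hd _ (hmem t ht)).hasFDerivAt.comp_hasDerivAt t h1
  have h0 := hder 0 (by simp; positivity)
  have := Complex.norm_deriv_le_of_forall_mem_sphere_norm_le (c := 0) (R := R / ‖w‖) (C := M)
    (f := fun t : ℂ => f (x + t • w)) (by positivity)
    (by
      apply DifferentiableOn.diffContOnCl
      intro t ht
      exact (hder t (closure_ball_subset_closedBall ht)).differentiableAt.differentiableWithinAt)
    (fun t ht => hM _ (hmem t (sphere_subset_closedBall ht)))
  rw [h0.deriv] at this
  simp only [zero_smul, add_zero] at this
  calc _ ≤ _ := this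
    _ = _ := by field_simp

lemma shilov_partial {n : ℕ} {f : (Fin n → ℂ) → ℂ} {W : Set (Fin n → ℂ)} (hW : IsOpen W)
    (hf : DifferentiableOn ℂ f W) (v : Fin n → ℂ) (hv : ‖v‖ ≤ 1) :
    DifferentiableOn ℂ (fun z => fderiv ℂ f z v) W := by
  intro z₀ hz₀
  apply DifferentiableAt.differentiableWithinAt
  obtain ⟨R, M, hR, hsub, hM⟩ : ∃ R M : ℝ, 0 < R ∧ ball z₀ (4 * R) ⊆ W ∧
      ∀ y ∈ ball z₀ (4 * R), ‖f y‖ ≤ M := by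
    have hc : ContinuousAt f z₀ := (hf.differentiableAt (hW.mem_nhds hz₀)).continuousAt
    have h1 : ∀ᶠ y in 𝓝 z₀, ‖f y‖ < ‖f z₀‖ + 1 :=
      hc.norm.eventually_lt continuousAt_const (by linarith)
    obtain ⟨r, hr, h⟩ := Metric.mem_nhds_iff.1 (inter_mem (hW.mem_nhds hz₀) h1)
    refine ⟨r / 4, ‖f z₀‖ + 1, by positivity, ?_, ?_⟩
    · intro y hy
      exact (h (by simpa [mul_div_cancel₀] using hy)).1
    · intro y hy
      exact (h (by simpa [mul_div_cancel₀] using hy)).2.le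
  have hd : ∀ y ∈ ball z₀ (4 * R), DifferentiableAt ℂ f y := fun y hy =>
    hf.differentiableAt (hW.mem_nhds (hsub hy))
  have hbd : ∀ y ∈ ball z₀ (2 * R), ‖fderiv ℂ f y‖ ≤ M / R := by
    intro y hy
    have : closedBall y R ⊆ ball z₀ (4 * R) := by
      apply closedBall_subset_ball'
      rw [mem_ball] at hy
      linarith
    exact shilov_fderiv_bound hR (fun u hu => hd u (this hu)) (fun u hu => hM u (this hu))
  have hmem : ∀ x ∈ ball z₀ R, ∀ t ∈ closedBall (0:ℂ) R, x + t • v ∈ ball z₀ (2 * R) := by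
    intro x hx t ht
    rw [mem_closedBall_zero_iff] at ht
    rw [mem_ball, dist_eq_norm] at *
    have h2 : ‖t • v‖ ≤ R := by
      rw [norm_smul]
      nlinarith [norm_nonneg t, norm_nonneg v]
    calc ‖x + t • v - z₀‖ = ‖(x - z₀) + t • v‖ := by congr 1; abel
      _ ≤ _ := norm_add_le _ _
      _ < 2 * R := by linarith
  have h24 : ball z₀ (2 * R) ⊆ ball z₀ (4 * R) := ball_subset_ball (by linarith)
  have hder : ∀ x ∈ ball z₀ R, ∀ t ∈ closedBall (0:ℂ) R,
      HasDerivAt (fun t : ℂ => f (x + t • v)) (fderiv ℂ f (x + t • v) v) t := by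
    intro x hx t ht
    have h1 : HasDerivAt (fun t : ℂ => x + t • v) v t := by
      simpa using ((hasDerivAt_id t).smul_const v).const_add x
    exact (hd _ (h24 (hmem x hx t ht))).hasFDerivAt.comp_hasDerivAt t h1
  have hcm : ∀ θ, circleMap 0 R θ ∈ closedBall (0:ℂ) R := fun θ =>
    circleMap_mem_closedBall 0 hR.le θ
  set c : ℝ → ℂ := fun θ => deriv (circleMap 0 R) θ * ((circleMap 0 R θ) ^ 2)⁻¹ with hc
  have hcc : Continuous c := by
    have : ∀ θ, circleMap 0 R θ ^ 2 ≠ 0 := fun θ => pow_ne_zero _ (by simp [hR.ne'])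
    simp only [hc, deriv_circleMap]
    fun_prop (disch := exact this _)
  have hcn : ∀ θ, ‖c θ‖ = R⁻¹ := by
    intro θ
    simp [hc, abs_of_pos hR]
    field_simp
  have hfc : ∀ x ∈ ball z₀ R, Continuous fun θ : ℝ => f (x + circleMap 0 R θ • v) := by
    intro x hx
    rw [continuous_iff_continuousAt]
    intro θ
    exact (hder x hx _ (hcm θ)).continuousAt.comp
      (f := circleMap 0 R) (continuous_circleMap 0 R).continuousAt
  have key : HasFDerivAt (fun x => ∫ θ in (0:ℝ)..2 * Real.pi, c θ * f (x + circleMap 0 R θ • v))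
      (∫ θ in (0:ℝ)..2 * Real.pi, c θ • fderiv ℂ f (z₀ + circleMap 0 R θ • v)) z₀ := by
    refine (intervalIntegral.hasFDerivAt_integral_of_dominated_of_fderiv_le
      (F := fun x θ => c θ * f (x + circleMap 0 R θ • v))
      (F' := fun x θ => c θ • fderiv ℂ f (x + circleMap 0 R θ • v))
      (bound := fun _ => R⁻¹ * (M / R)) (ball_mem_nhds z₀ hR) ?_ ?_ ?_ ?_ ?_ ?_)
    · filter_upwards [ball_mem_nhds z₀ hR] with x hx
      exact (hcc.mul (hfc x hx)).aestronglyMeasurable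
    · exact (hcc.mul (hfc z₀ (mem_ball_self hR))).intervalIntegrable _ _
    · refine AEMeasurable.aestronglyMeasurable (Measurable.aemeasurable ?_)
      refine hcc.measurable.smul ((measurable_fderiv ℂ f).comp ?_)
      exact Continuous.measurable (by fun_prop)
    · refine Eventually.of_forall fun θ _ x hx => ?_
      rw [norm_smul, hcn]
      gcongr
      exact hbd _ (hmem x hx _ (hcm θ))
    · exact intervalIntegrable_const
    · refine Eventually.of_forall fun θ _ x hx => ?_
      have h1 := (hd _ (h24 (hmem x hx _ (hcm θ)))).hasFDerivAt
      have h2 : HasFDerivAt (fun x => f (x + circleMap 0 R θ • v))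
        (fderiv ℂ f (x + circleMap 0 R θ • v)) x := by
        rw [hasFDerivAt_comp_add_right]
        exact h1
      exact h2.const_mul (c θ)
  have key2 := (key.const_mul ((2 * Real.pi * Complex.I : ℂ)⁻¹)).differentiableAt
  refine key2.congr_of_eventuallyEq ?_
  filter_upwards [ball_mem_nhds z₀ hR] with x hx
  have hD : DifferentiableOn ℂ (fun t : ℂ => f (x + t • v)) (closedBall 0 R) := fun t ht =>
    (hder x hx t ht).differentiableAt.differentiableWithinAt
  have h0 := (hder x hx 0 (by simp [hR.le])).deriv
  simp only [zero_smul, add_zero] at h0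
  rw [← h0]
  have h3 := hD.deriv_eq_smul_circleIntegral hR
  have h4 : (∫ θ in (0:ℝ)..2 * Real.pi, c θ * f (x + circleMap 0 R θ • v)) =
      (2 * Real.pi * Complex.I : ℂ) • deriv (fun t : ℂ => f (x + t • v)) 0 := by
    rw [← h3]
    simp only [circleIntegral, hc, mul_assoc, one_div, smul_eq_mul, sub_zero]
  rw [h4, smul_eq_mul, inv_mul_cancel_left₀ Complex.two_pi_I_ne_zero]

lemma shilov_inv_bound {n : ℕ} {Γ : Set (Fin n → ℂ)} (hΓ : IsCompact Γ)
    (g : Fin n → Fin n → (Fin n → ℂ) → ℂ) (hg : ∀ i j, ContinuousOn (g i j) Γ)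
    (hginv : ∀ z ∈ Γ, (Matrix.of fun i j => g i j z).det ≠ 0) :
    ∃ K > (0 : ℝ), ∀ z ∈ Γ, ∀ i j, ‖(Matrix.of fun i j => g i j z)⁻¹ i j‖ ≤ K := by
  have hG : ContinuousOn (fun z => (Matrix.of fun i j => g i j z)) Γ := by
    refine continuousOn_pi.2 fun i => continuousOn_pi.2 fun j => hg i j
  have hinv : ∀ i j, ContinuousOn (fun z => (Matrix.of fun i j => g i j z)⁻¹ i j) Γ := by
    intro i j
    have hdet : ContinuousOn (fun z => (Matrix.of fun i j => g i j z).det) Γ :=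
      (continuous_id.matrix_det).comp_continuousOn hG
    have hadj : ContinuousOn (fun z => (Matrix.of fun i j => g i j z).adjugate i j) Γ :=
      ((continuous_id.matrix_adjugate).matrix_elem i j).comp_continuousOn hG
    refine ((hdet.inv₀ hginv).mul hadj).congr fun z hz => ?_
    simp [Matrix.inv_def]
  choose K hK using fun i j => hΓ.exists_bound_of_continuousOn (hinv i j)
  refine ⟨(∑ i, ∑ j, |K i j|) + 1, by positivity, fun z hz i j => ?_⟩
  have h1 : |K i j| ≤ ∑ j, |K i j| :=
    Finset.single_le_sum (f := fun j => |K i j|) (fun _ _ => abs_nonneg _) (Finset.mem_univ j)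
  have h2 : ∑ j, |K i j| ≤ ∑ i, ∑ j, |K i j| :=
    Finset.single_le_sum (f := fun i => ∑ j, |K i j|) (fun _ _ => by positivity) (Finset.mem_univ i)
  have := hK i j z hz
  have := le_abs_self (K i j)
  linarith

/-- The Shilov boundary estimate (Proposition `Shilov`):
Let `U ⊆ ℂⁿ` be a nonempty bounded open set and `Γ ⊆ closure U` a closed set with the
norming (Shilov) property for functions continuous on `closure U` and holomorphic on `U`.
Let `g i j` be holomorphic on an open neighborhood `V` of `closure U`, with the matrix
`(g i j z)` invertible for every `z ∈ Γ`.  Then there is `C > 0` such that for every open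
`W` with `closure U ⊆ W ⊆ V` and every `f` holomorphic on `W`,
`∑ i sup_U |∂f/∂z_i| ≤ C ∑ j sup_U |∑ i g j i ∂f/∂z_i|`. -/
theorem shilov_estimate (n : ℕ) (hn : 0 < n)
    (U : Set (Fin n → ℂ)) (hUne : U.Nonempty) (hUo : IsOpen U)
    (hUb : Bornology.IsBounded U)
    (Γ : Set (Fin n → ℂ)) (hΓc : IsClosed Γ) (hΓsub : Γ ⊆ closure U)
    (hnorming : ∀ g : (Fin n → ℂ) → ℂ, ContinuousOn g (closure U) →
      DifferentiableOn ℂ g U →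
      sSup ((fun z => ‖g z‖) '' closure U) = sSup ((fun z => ‖g z‖) '' Γ))
    (V : Set (Fin n → ℂ)) (hVo : IsOpen V) (hUV : closure U ⊆ V)
    (g : Fin n → Fin n → (Fin n → ℂ) → ℂ)
    (hg : ∀ i j, DifferentiableOn ℂ (g i j) V)
    (hginv : ∀ z ∈ Γ, (Matrix.of fun i j => g i j z).det ≠ 0) :
    ∃ C > (0 : ℝ), ∀ W : Set (Fin n → ℂ), IsOpen W → closure U ⊆ W → W ⊆ V →
      ∀ f : (Fin n → ℂ) → ℂ, DifferentiableOn ℂ f W →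
      ∑ i : Fin n, ⨆ z : U, ‖fderiv ℂ f z (Pi.single i 1)‖ ≤
        C * ∑ j : Fin n, ⨆ z : U, ‖∑ i : Fin n, g j i z * fderiv ℂ f z (Pi.single i 1)‖ := by
  have hcU : IsCompact (closure U) := hUb.isCompact_closure
  have hΓ : IsCompact Γ := hcU.of_isClosed_subset hΓc hΓsub
  obtain ⟨K, hK0, hK⟩ := shilov_inv_bound hΓ g
    (fun i j => (hg i j).continuousOn.mono (hΓsub.trans hUV)) hginv
  have hn' : (0:ℝ) < n := by exact_mod_cast hn
  refine ⟨n * K, by positivity, fun W hW hUW hWV f hf => ?_⟩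
  have hh : ∀ i : Fin n, DifferentiableOn ℂ (fun z => fderiv ℂ f z (Pi.single i 1)) W :=
    fun i => shilov_partial hW hf (Pi.single i 1) (by rw [Pi.norm_single]; simp)
  have hZ : ∀ j : Fin n, ContinuousOn
      (fun z => ‖∑ i : Fin n, g j i z * fderiv ℂ f z (Pi.single i 1)‖) (closure U) := by
    intro j
    refine ContinuousOn.norm (continuousOn_finsetSum _ fun i _ => ?_)
    exact ((hg j i).continuousOn.mono hUV).mul ((hh i).continuousOn.mono hUW)
  set S : Fin n → ℝ :=
    fun j => ⨆ z : U, ‖∑ i : Fin n, g j i z * fderiv ℂ f z (Pi.single i 1)‖ with hS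
  have hle : ∀ j, ∀ z ∈ closure U,
      ‖∑ i : Fin n, g j i z * fderiv ℂ f z (Pi.single i 1)‖ ≤ S j := by
    intro j z hz
    refine le_on_closure (f := fun z => ‖∑ i : Fin n, g j i z * fderiv ℂ f z (Pi.single i 1)‖)
      (g := fun _ => S j) (fun y hy => ?_) (hZ j) continuousOn_const hz
    obtain ⟨B, hB⟩ := hcU.exists_bound_of_continuousOn (hZ j)
    refine le_ciSup (f := fun z : U => ‖∑ i : Fin n, g j i z * fderiv ℂ f z (Pi.single i 1)‖)
      ⟨B, ?_⟩ ⟨y, hy⟩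
    rintro _ ⟨w, rfl⟩
    simpa using hB w (subset_closure w.2)
  have hS0 : ∀ j, 0 ≤ S j := fun j => Real.iSup_nonneg fun _ => norm_nonneg _
  have hmain : ∀ i : Fin n, (⨆ z : U, ‖fderiv ℂ f z (Pi.single i 1)‖) ≤ K * ∑ j, S j := by
    intro i
    have hKS : 0 ≤ K * ∑ j, S j := mul_nonneg hK0.le (Finset.sum_nonneg fun j _ => hS0 j)
    have hco := (hh i).continuousOn.mono hUW
    have hsup := hnorming _ hco ((hh i).mono (subset_closure.trans hUW))
    have hbdd := (hcU.image_of_continuousOn hco.norm).bddAbove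
    refine Real.iSup_le (fun z => ?_) hKS
    refine (le_csSup hbdd (mem_image_of_mem _ (subset_closure z.2))).trans ?_
    rw [hsup]
    refine Real.sSup_le ?_ hKS
    rintro _ ⟨w, hw, rfl⟩
    have hinv : (Matrix.of fun i j => g i j w)⁻¹ * (Matrix.of fun i j => g i j w) = 1 :=
      Matrix.nonsing_inv_mul _ (isUnit_iff_ne_zero.2 (hginv w hw))
    have hvec : (Matrix.of fun i j => g i j w)⁻¹.mulVec
        ((Matrix.of fun i j => g i j w).mulVec fun i => fderiv ℂ f w (Pi.single i 1)) =
        fun i => fderiv ℂ f w (Pi.single i 1) := by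
      rw [Matrix.mulVec_mulVec, hinv, Matrix.one_mulVec]
    have hi := congrFun hvec i
    change ‖fderiv ℂ f w (Pi.single i 1)‖ ≤ _
    rw [← hi, Finset.mul_sum]
    change ‖∑ j, (Matrix.of fun i j => g i j w)⁻¹ i j *
      ∑ i : Fin n, g j i w * fderiv ℂ f w (Pi.single i 1)‖ ≤ _
    refine (norm_sum_le _ _).trans (Finset.sum_le_sum fun j _ => ?_)
    rw [norm_mul]
    exact mul_le_mul (hK w hw i j) (hle j w (hΓsub hw)) (norm_nonneg _) hK0.le
  calc _ ≤ ∑ i : Fin n, K * ∑ j, S j := Finset.sum_le_sum fun i _ => hmain i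
    _ = _ := by simp [mul_assoc]
end
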